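/- arXiv:2011.13094 — 2 statements merged into one kernel-verified Lean document; each statement's English description precedes it below -/
import Mathlib

section
/- Let T be a positive integer, v > 0, γ ∈ ℝ, and let r₁,…,r_T, β₁,…,β_T, σ₁,…,σ_T be real numbers satisfying: σ_t ≥ 0 and σ_t² ≤ v for all t; 0 ≤ β_t ≤ β_T for all t; r_t ≤ 2·β_t·σ_t for all t; and (1/2)·Σ_{t=1}^T log(1 + σ_t²/v) ≤ γ. Then the cumulative regret satisfies Σ_{t=1}^T r_t ≤ 4·β_T·√(v · T · γ). -/
/-!
Cauchy–Schwarz reduces the cumulative regret to the total variance `∑ σ t ^ 2`. Each variance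
`y ≤ M` is at most `(2 * v + M) / 2 * log (1 + y / v)`, because `2 * x / (x + 2) ≤ log (1 + x)`,
so the total variance is at most `(2 * v + M) * γ`. The constant `4` is the case `M = 2 * v`.
-/

open Finset Real

section Variance

variable {ι : Type*} {v M : ℝ}

lemma le_mul_log_one_add_div {y : ℝ} (hv : 0 < v) (hy : 0 ≤ y) (hyM : y ≤ M) :
    y ≤ (2 * v + M) / 2 * log (1 + y / v) := by
  have hlog : 2 * (y / v) / (y / v + 2) ≤ log (1 + y / v) :=
    le_log_one_add_of_nonneg (by positivity)
  calc
    y = (2 * v + y) / 2 * (2 * (y / v) / (y / v + 2)) := by field_simp; ring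
    _ ≤ (2 * v + M) / 2 * log (1 + y / v) := by gcongr; linarith

lemma sum_le_mul_half_sum_log_one_add_div {s : Finset ι} {y : ι → ℝ} (hv : 0 < v)
    (hy : ∀ i ∈ s, 0 ≤ y i) (hyM : ∀ i ∈ s, y i ≤ M) :
    ∑ i ∈ s, y i ≤ (2 * v + M) * ((1 / 2) * ∑ i ∈ s, log (1 + y i / v)) :=
  calc
    ∑ i ∈ s, y i ≤ ∑ i ∈ s, (2 * v + M) / 2 * log (1 + y i / v) :=
      sum_le_sum fun i hi ↦ le_mul_log_one_add_div hv (hy i hi) (hyM i hi)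
    _ = (2 * v + M) * ((1 / 2) * ∑ i ∈ s, log (1 + y i / v)) := by rw [← mul_sum]; ring

end Variance

lemma sum_abs_le_sqrt_card_mul_sum_sq {ι : Type*} (s : Finset ι) (f : ι → ℝ) :
    ∑ i ∈ s, |f i| ≤ √(#s * ∑ i ∈ s, f i ^ 2) := by
  apply le_sqrt_of_sq_le
  simpa only [sq_abs] using sq_sum_le_card_mul_sum_sq (s := s) (f := fun i ↦ |f i|)

theorem stmt_10_general {ι : Type*} {s : Finset ι} {v γ B M : ℝ} {r β σ : ι → ℝ} (hv : 0 < v)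
    (hσ : ∀ i ∈ s, σ i ^ 2 ≤ M) (hβ : ∀ i ∈ s, |β i| ≤ B)
    (hr : ∀ i ∈ s, r i ≤ 2 * β i * σ i)
    (hγ : (1 / 2) * ∑ i ∈ s, log (1 + σ i ^ 2 / v) ≤ γ) :
    ∑ i ∈ s, r i ≤ 2 * B * √(#s * ((2 * v + M) * γ)) := by
  rcases s.eq_empty_or_nonempty with rfl | ⟨j, hj⟩
  · simp
  have hB : 0 ≤ B := (abs_nonneg _).trans (hβ j hj)
  have hM : 0 ≤ M := (sq_nonneg _).trans (hσ j hj)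
  have regret_le : ∀ i ∈ s, r i ≤ 2 * B * |σ i| := fun i hi ↦
    calc
      r i ≤ 2 * (β i * σ i) := (hr i hi).trans_eq (mul_assoc ..)
      _ ≤ 2 * (|β i| * |σ i|) := by rw [← abs_mul]; gcongr; exact le_abs_self _
      _ ≤ 2 * B * |σ i| := by rw [← mul_assoc]; gcongr; exact hβ i hi
  have variance_le : ∑ i ∈ s, σ i ^ 2 ≤ (2 * v + M) * γ :=
    (sum_le_mul_half_sum_log_one_add_div hv (fun _ _ ↦ sq_nonneg _) hσ).trans (by gcongr)
  calc
    ∑ i ∈ s, r i ≤ ∑ i ∈ s, 2 * B * |σ i| := sum_le_sum regret_le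
    _ = 2 * B * ∑ i ∈ s, |σ i| := (mul_sum ..).symm
    _ ≤ 2 * B * √(#s * ∑ i ∈ s, σ i ^ 2) := by gcongr; exact sum_abs_le_sqrt_card_mul_sum_sq s σ
    _ ≤ 2 * B * √(#s * ((2 * v + M) * γ)) := by gcongr

/-- Cumulative regret bound via the information-gain term: if
`r t ≤ 2·β t·σ t`, `0 ≤ σ t`, `σ t ² ≤ v`, `0 ≤ β t ≤ β T`, and
`(1/2)·∑ log(1 + σ t ²/v) ≤ γ`, then `∑ r t ≤ 4·β T·√(v·T·γ)`. -/
theorem stmt_10 (T : ℕ) (hT : 0 < T) (v γ : ℝ) (hv : 0 < v)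
    (r β σ : ℕ → ℝ)
    (hσ : ∀ t ∈ Finset.Icc 1 T, 0 ≤ σ t ∧ σ t ^ 2 ≤ v)
    (hβ : ∀ t ∈ Finset.Icc 1 T, 0 ≤ β t ∧ β t ≤ β T)
    (hr : ∀ t ∈ Finset.Icc 1 T, r t ≤ 2 * β t * σ t)
    (hγ : (1 / 2 : ℝ) * ∑ t ∈ Finset.Icc 1 T, Real.log (1 + σ t ^ 2 / v) ≤ γ) :
    ∑ t ∈ Finset.Icc 1 T, r t ≤ 4 * β T * Real.sqrt (v * T * γ) := by
  have sqrt_eq : √(#(Icc 1 T) * ((2 * v + 2 * v) * γ)) = 2 * √(v * T * γ) :=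
    calc
      _ = √(2 ^ 2 * (v * T * γ)) := by rw [Nat.card_Icc, Nat.add_sub_cancel]; ring_nf
      _ = 2 * √(v * T * γ) := by rw [sqrt_mul (sq_nonneg 2), sqrt_sq zero_le_two]
  calc
    ∑ t ∈ Icc 1 T, r t ≤ 2 * β T * √(#(Icc 1 T) * ((2 * v + 2 * v) * γ)) :=
      stmt_10_general hv (fun t ht ↦ by linarith [(hσ t ht).2])
        (fun t ht ↦ (abs_of_nonneg (hβ t ht).1).trans_le (hβ t ht).2) hr hγ
    _ = 4 * β T * √(v * T * γ) := by rw [sqrt_eq]; ring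
end

section
/- Let T and N be positive integers, v > 0, k_max > 0 with 2πe·k_max ≥ 1, and let Σ be an N×N real symmetric positive semidefinite matrix with diagonal entries Σ_ii ≤ k_max. Let r₁,…,r_T, β₁,…,β_T, σ₁,…,σ_T be real numbers satisfying: σ_t ≥ 0 and σ_t² ≤ v for all t; 0 ≤ β_t ≤ β_T for all t; r_t ≤ 2·β_t·σ_t for all t; and (1/2)·Σ_{t=1}^T log(1 + σ_t²/v) ≤ (1/2)·log((2πe)^N · det(Σ)). Then the cumulative regret satisfies Σ_{t=1}^T r_t ≤ 4·β_T·√(v · N · T · log(2πe·k_max)). -/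
/-!
Bounding each `β t` by a common constant and applying Cauchy–Schwarz reduces the cumulative regret
to `∑ σ t ^ 2`. Concavity of `log` on `[1, 1 + M / v]` bounds each `σ t ^ 2 ≤ M` by a multiple of
`log (1 + σ t ^ 2 / v)`, so the sum is controlled by the information gain, hence by the Gaussian
entropy. AM–GM on the eigenvalues of the covariance matrix gives
`det S ≤ (trace S / N) ^ N ≤ kmax ^ N`, which replaces Hadamard's inequality. For `M = v` the
resulting constant is `2 / √(log 2) ≤ 4`.
-/

open Finset Real

section Determinant

open scoped ComplexOrder

theorem prod_le_sum_div_card_pow {ι : Type*} (s : Finset ι) {f : ι → ℝ} (hf : ∀ i ∈ s, 0 ≤ f i) :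
    ∏ i ∈ s, f i ≤ ((∑ i ∈ s, f i) / #s) ^ #s := by
  rcases s.eq_empty_or_nonempty with rfl | hs
  · simp
  have hprod : 0 ≤ ∏ i ∈ s, f i := prod_nonneg hf
  have amgm : (∏ i ∈ s, f i) ^ (#s : ℝ)⁻¹ ≤ (∑ i ∈ s, f i) / #s := by
    simpa using geom_mean_le_arith_mean s (fun _ ↦ 1) f (by simp) (by simpa using hs) hf
  calc ∏ i ∈ s, f i = ((∏ i ∈ s, f i) ^ (#s : ℝ)⁻¹) ^ #s :=
        (rpow_inv_natCast_pow hprod hs.card_ne_zero).symm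
    _ ≤ ((∑ i ∈ s, f i) / #s) ^ #s := by gcongr

variable {𝕜 n : Type*} [RCLike 𝕜] [Fintype n] [DecidableEq n] {A : Matrix n n 𝕜}

theorem posSemidef_re_det_le_re_trace_div_card_pow (hA : A.PosSemidef) :
    RCLike.re A.det ≤ (RCLike.re A.trace / Fintype.card n) ^ Fintype.card n := by
  rw [hA.isHermitian.det_eq_prod_eigenvalues, hA.isHermitian.trace_eq_sum_eigenvalues,
    ← RCLike.ofReal_prod, ← RCLike.ofReal_sum, RCLike.ofReal_re, RCLike.ofReal_re]
  exact prod_le_sum_div_card_pow univ fun i _ ↦ hA.eigenvalues_nonneg i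

theorem posSemidef_log_re_det_le (hA : A.PosSemidef) {k : ℝ} (hk : 1 ≤ k)
    (htr : RCLike.re A.trace ≤ Fintype.card n * k) :
    log (RCLike.re A.det) ≤ Fintype.card n * log k := by
  have hk₀ : 0 ≤ k := zero_le_one.trans hk
  have htr₀ : 0 ≤ RCLike.re A.trace := (RCLike.nonneg_iff.1 hA.trace_nonneg).1
  have hdet₀ : 0 ≤ RCLike.re A.det := (RCLike.nonneg_iff.1 hA.det_nonneg).1
  rcases hdet₀.eq_or_lt' with hzero | hpos
  · rw [hzero, log_zero]
    exact mul_nonneg (Nat.cast_nonneg _) (log_nonneg hk)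
  have hdet : RCLike.re A.det ≤ k ^ Fintype.card n :=
    calc RCLike.re A.det ≤ (RCLike.re A.trace / Fintype.card n) ^ Fintype.card n :=
          posSemidef_re_det_le_re_trace_div_card_pow hA
      _ ≤ k ^ Fintype.card n := by
          gcongr
          exact div_le_of_le_mul₀ (Nat.cast_nonneg _) hk₀ (by linarith)
  calc log (RCLike.re A.det) ≤ log (k ^ Fintype.card n) := log_le_log hpos hdet
    _ = Fintype.card n * log k := log_pow _ _

theorem posSemidef_log_pow_mul_det_le {S : Matrix n n ℝ} (hS : S.PosSemidef) {c k : ℝ}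
    (hc : 0 ≤ c) (hck : 1 ≤ c * k) (htr : S.trace ≤ Fintype.card n * k) :
    log (c ^ Fintype.card n * S.det) ≤ Fintype.card n * log (c * k) := by
  have htr' : (c • S).trace ≤ Fintype.card n * (c * k) := by
    rw [Matrix.trace_smul, smul_eq_mul, mul_left_comm]
    gcongr
  simpa [Matrix.det_smul] using posSemidef_log_re_det_le (hS.smul hc) hck htr'

end Determinant

section SumOfVariances

theorem mul_log_one_add_le_log_one_add_mul {p x : ℝ} (hp₀ : 0 ≤ p) (hp₁ : p ≤ 1) (hx : -1 < x) :
    p * log (1 + x) ≤ log (1 + p * x) := by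
  have hpos : 0 < 1 + x := by linarith
  rw [← log_rpow hpos]
  exact log_le_log (rpow_pos_of_pos hpos p) (rpow_one_add_le_one_add_mul_self hx.le hp₀ hp₁)

variable {ι : Type*} (s : Finset ι)

theorem sum_le_div_log_mul_sum_log_one_add {f : ι → ℝ} {v M : ℝ} (hv : 0 < v) (hM : 0 < M)
    (hf : ∀ t ∈ s, 0 ≤ f t ∧ f t ≤ M) :
    ∑ t ∈ s, f t ≤ M / log (1 + M / v) * ∑ t ∈ s, log (1 + f t / v) := by
  have hlog : 0 < log (1 + M / v) := log_pos (lt_add_of_pos_right 1 (div_pos hM hv))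
  rw [mul_sum]
  refine sum_le_sum fun t ht ↦ ?_
  have hconc : f t / M * log (1 + M / v) ≤ log (1 + f t / v) := by
    have h := mul_log_one_add_le_log_one_add_mul (div_nonneg (hf t ht).1 hM.le)
      ((div_le_one hM).2 (hf t ht).2) (neg_one_lt_zero.trans (div_pos hM hv))
    rwa [div_mul_div_cancel₀ hM.ne'] at h
  calc f t = M / log (1 + M / v) * (f t / M * log (1 + M / v)) := by
        rw [mul_left_comm, div_mul_cancel₀ _ hlog.ne', div_mul_cancel₀ _ hM.ne']
    _ ≤ M / log (1 + M / v) * log (1 + f t / v) := by gcongr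

theorem sum_le_sqrt_card_mul_sum_sq (f : ι → ℝ) : ∑ t ∈ s, f t ≤ √(#s * ∑ t ∈ s, f t ^ 2) :=
  le_sqrt_of_sq_le sq_sum_le_card_mul_sum_sq

end SumOfVariances

theorem sqrt_div_log_two_le (x : ℝ) : √(x / log 2) ≤ 2 * √x := by
  have hhalf : 1 / 2 ≤ √(log 2) := le_sqrt_of_sq_le (by linarith [log_two_gt_d9])
  rw [sqrt_div' x (log_nonneg one_le_two), div_le_iff₀ (by linarith)]
  nlinarith [sqrt_nonneg x]

theorem stmt_11_general {ι n : Type*} [Fintype n] [DecidableEq n] (s : Finset ι)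
    {v M B kmax : ℝ} (hv : 0 < v) (hM : 0 < M) (hB : 0 ≤ B) (hke : 1 ≤ 2 * π * exp 1 * kmax)
    {S : Matrix n n ℝ} (hS : S.PosSemidef) (htr : S.trace ≤ Fintype.card n * kmax)
    {r β σ : ι → ℝ} (hσ : ∀ t ∈ s, 0 ≤ σ t ∧ σ t ^ 2 ≤ M) (hβ : ∀ t ∈ s, β t ≤ B)
    (hr : ∀ t ∈ s, r t ≤ 2 * β t * σ t)
    (hγ : (1 / 2 : ℝ) * ∑ t ∈ s, log (1 + σ t ^ 2 / v)
      ≤ (1 / 2 : ℝ) * log ((2 * π * exp 1) ^ Fintype.card n * S.det)) :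
    ∑ t ∈ s, r t
      ≤ 2 * B * √(M * Fintype.card n * #s * log (2 * π * exp 1 * kmax) / log (1 + M / v)) := by
  set L := log (2 * π * exp 1 * kmax)
  have hgain : ∑ t ∈ s, log (1 + σ t ^ 2 / v) ≤ Fintype.card n * L := by
    linarith [posSemidef_log_pow_mul_det_le hS (by positivity) hke htr]
  have hfactor : 0 ≤ M / log (1 + M / v) :=
    div_nonneg hM.le (log_nonneg (le_add_of_nonneg_right (div_pos hM hv).le))
  have hsq : ∑ t ∈ s, σ t ^ 2 ≤ M / log (1 + M / v) * (Fintype.card n * L) :=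
    (sum_le_div_log_mul_sum_log_one_add s hv hM fun t ht ↦ ⟨sq_nonneg _, (hσ t ht).2⟩).trans
      (mul_le_mul_of_nonneg_left hgain hfactor)
  calc ∑ t ∈ s, r t ≤ ∑ t ∈ s, 2 * B * σ t := by
        refine sum_le_sum fun t ht ↦ (hr t ht).trans ?_
        gcongr
        exacts [(hσ t ht).1, hβ t ht]
    _ = 2 * B * ∑ t ∈ s, σ t := (mul_sum ..).symm
    _ ≤ 2 * B * √(#s * ∑ t ∈ s, σ t ^ 2) := by gcongr; exact sum_le_sqrt_card_mul_sum_sq s σ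
    _ ≤ 2 * B * √(#s * (M / log (1 + M / v) * (Fintype.card n * L))) := by gcongr
    _ = 2 * B * √(M * Fintype.card n * #s * L / log (1 + M / v)) := by ring_nf

/-- Deterministic core of the main cumulative regret bound: combining the
instantaneous regret bounds `r t ≤ 2·β t·σ t`, the information-gain bound by the Gaussian
entropy `(1/2)·log((2πe)^N·det S)`, and Hadamard's inequality for the positive
semidefinite covariance matrix `S` with diagonal bounded by `k_max`, one gets
`∑ r t ≤ 4·β T·√(v·N·T·log(2πe·k_max))`. -/
theorem stmt_11 (T N : ℕ) (hT : 0 < T) (hN : 0 < N) (v : ℝ) (hv : 0 < v)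
    (kmax : ℝ) (hk : 0 < kmax) (hke : 1 ≤ 2 * Real.pi * Real.exp 1 * kmax)
    (S : Matrix (Fin N) (Fin N) ℝ) (hS : S.PosSemidef)
    (hdiag : ∀ i : Fin N, S i i ≤ kmax)
    (r β σ : ℕ → ℝ)
    (hσ : ∀ t ∈ Finset.Icc 1 T, 0 ≤ σ t ∧ σ t ^ 2 ≤ v)
    (hβ : ∀ t ∈ Finset.Icc 1 T, 0 ≤ β t ∧ β t ≤ β T)
    (hr : ∀ t ∈ Finset.Icc 1 T, r t ≤ 2 * β t * σ t)
    (hγ : (1 / 2 : ℝ) * ∑ t ∈ Finset.Icc 1 T, Real.log (1 + σ t ^ 2 / v)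
      ≤ (1 / 2 : ℝ) * Real.log ((2 * Real.pi * Real.exp 1) ^ N * S.det)) :
    ∑ t ∈ Finset.Icc 1 T, r t
      ≤ 4 * β T * Real.sqrt (v * N * T * Real.log (2 * Real.pi * Real.exp 1 * kmax)) := by
  have hβT : 0 ≤ β T := (hβ T (mem_Icc.2 ⟨hT, le_rfl⟩)).1
  have htr : S.trace ≤ Fintype.card (Fin N) * kmax := by
    simpa [Matrix.trace] using sum_le_card_nsmul univ (fun i ↦ S i i) kmax fun i _ ↦ hdiag i
  have hregret : ∑ t ∈ Icc 1 T, r t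
      ≤ 2 * β T * √(v * N * T * log (2 * π * exp 1 * kmax) / log 2) := by
    simpa [hv.ne', one_add_one_eq_two] using stmt_11_general (Icc 1 T) hv hv hβT hke hS htr hσ
      (fun t ht ↦ (hβ t ht).2) hr (by simpa using hγ)
  calc ∑ t ∈ Icc 1 T, r t ≤ _ := hregret
    _ ≤ 2 * β T * (2 * √(v * N * T * log (2 * π * exp 1 * kmax))) := by
        gcongr
        exact sqrt_div_log_two_le _
    _ = 4 * β T * √(v * N * T * log (2 * π * exp 1 * kmax)) := by ring
end
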